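/- For the normal means model y_i = θ_i + ε_i, ε_i i.i.d. N(0,1), i = 1,…,n, with n ≥ 2, under the Dirichlet–Laplace prior of parameter a > 0, the posterior conditional density p(ψ, τ | θ, φ) = p(θ,ψ,τ,φ | y) / p(θ,φ | y), where p(θ,φ | y) = ∫∫ p(θ,ψ,τ,φ | y) dψ dτ, is not (almost everywhere in (θ,ψ,τ)) constant as a function of φ. Equivalently, the set of tuples (θ, ψ, τ, φ, φ̃) with all φ_i, φ̃_i > 0, Σφ_i = Σφ̃_i = 1, such that p(θ,ψ,τ,φ | y) · p(θ, φ̃ | y) ≠ p(θ,ψ,τ,φ̃ | y) · p(θ, φ | y), has positive measure. -/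

import Mathlib

/-!
Suppose the exceptional set were null. By Fubini, for almost every `(θ, φ, φ̃)` the densities
`p(θ, ·, ·, φ)` and `p(θ, ·, ·, φ̃)` are then related by
`p(θ, ψ, τ, φ) p(θ, φ̃) = p(θ, ψ, τ, φ̃) p(θ, φ)` for almost every `(ψ, τ)`. If both marginals are
positive, the two densities are proportional as functions of `(ψ, τ)`. On its support the
posterior is a function of `(θ, ψ, τ)` times a function of `φ` times
`exp (-∑ θ_i² / (2 ψ_i τ² φ_i²))` (`post_eq`), so proportionality says that
`∑ θ_i² / (2 ψ_i τ²) (1 / φ_i² - 1 / φ̃_i²)` does not depend on `(ψ, τ)`, almost everywhere and hence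
everywhere by continuity (`quadForm_sub_const_of_ae`). Varying `ψ_0` alone contradicts this on the
nonempty open set where `θ_0 ≠ 0` and `φ_0 ≠ φ̃_0` (`quadForm_sub_not_const`).

Since non-integrable functions have Bochner integral zero, it must also be shown that the
normalizing constant and the marginals `p(θ, φ ∣ y)` do not degenerate (`Z_pos`, `ae_pθφ_pos`). This
rests on `integrable_post`: the likelihood is at most one and the prior is proper. The only
part of the latter not covered by a Mathlib density is finiteness of the Dirichlet integral, which is
an iterated convolution of the kernels `t^(a-1)` on `(0, ∞)` and is bounded by induction through
Beta integrals (`lintegral_dirichlet_le`).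
-/

open MeasureTheory Real
open scoped Classical

namespace DLNormalMeans

/-- The state space of the Gibbs sampler for the normal means problem of dimension
`n = m + 1`: the mean `θ ∈ ℝⁿ`, the local scales `ψ` (constrained to `(0,∞)ⁿ` by the
density), the global scale `τ` (constrained to `(0,∞)`), and the Dirichlet weights `φ`,
parametrized by their first `n − 1 = m` coordinates `u` (so that the `(n−1)`-dimensional
Lebesgue measure on the open simplex is Lebesgue measure on `u`). -/
abbrev E (m : ℕ) := (Fin (m + 1) → ℝ) × (Fin (m + 1) → ℝ) × ℝ × (Fin m → ℝ)

/-- The full simplex vector `φ = (u_1, …, u_m, 1 − Σ u_i)` from its free coordinates. -/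
noncomputable def phiFull (m : ℕ) (u : Fin m → ℝ) : Fin (m + 1) → ℝ :=
  Fin.snoc u (1 - ∑ i, u i)

/-- Membership of the free coordinates in the open simplex. -/
def inSimplex (m : ℕ) (u : Fin m → ℝ) : Prop := (∀ i, 0 < u i) ∧ ∑ i, u i < 1

/-- The unnormalized joint posterior density (likelihood times Dirichlet–Laplace prior of
parameter `a`) of `(θ, ψ, τ, φ)` given the data `y` in the normal means model
`y_i = θ_i + ε_i`, `ε_i ~ N(0,1)` i.i.d., with respect to the product of Lebesgue measures
described in `E`. -/
noncomputable def post (m : ℕ) (a : ℝ) (y : Fin (m + 1) → ℝ) (x : E m) : ℝ :=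
  let θ := x.1; let ψ := x.2.1; let τ := x.2.2.1; let u := x.2.2.2
  let φ := phiFull m u
  (if (∀ i, 0 < ψ i) ∧ 0 < τ ∧ inSimplex m u then (1 : ℝ) else 0) *
    (∏ i, (2 * π) ^ (-(1 : ℝ) / 2) * Real.exp (-(y i - θ i) ^ 2 / 2)) *
    (∏ i, (2 * π * ψ i * τ ^ 2 * φ i ^ 2) ^ (-(1 : ℝ) / 2) *
      Real.exp (-(θ i) ^ 2 / (2 * ψ i * τ ^ 2 * φ i ^ 2))) *
    (∏ i, (1 / 2 : ℝ) * Real.exp (-ψ i / 2)) *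
    (((1 / 2 : ℝ) ^ (((m : ℝ) + 1) * a) / Real.Gamma (((m : ℝ) + 1) * a)) *
      τ ^ (((m : ℝ) + 1) * a - 1) * Real.exp (-τ / 2)) *
    ((Real.Gamma (((m : ℝ) + 1) * a) / ∏ _i : Fin (m + 1), Real.Gamma a) *
      ∏ i, φ i ^ (a - 1))

/-- The normalizing constant of the posterior. -/
noncomputable def Z (m : ℕ) (a : ℝ) (y : Fin (m + 1) → ℝ) : ℝ := ∫ x : E m, post m a y x

/-- The joint posterior density `p(θ, ψ, τ, φ ∣ y)`. -/
noncomputable def p (m : ℕ) (a : ℝ) (y : Fin (m + 1) → ℝ) (x : E m) : ℝ :=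
  post m a y x / Z m a y

/-- Marginal posterior density `p(ψ, τ, φ ∣ y)`. -/
noncomputable def pψτφ (m : ℕ) (a : ℝ) (y : Fin (m + 1) → ℝ)
    (ψ : Fin (m + 1) → ℝ) (τ : ℝ) (u : Fin m → ℝ) : ℝ :=
  ∫ θ : Fin (m + 1) → ℝ, p m a y (θ, ψ, τ, u)

/-- Marginal posterior density `p(θ, τ, φ ∣ y)`. -/
noncomputable def pθτφ (m : ℕ) (a : ℝ) (y : Fin (m + 1) → ℝ)
    (θ : Fin (m + 1) → ℝ) (τ : ℝ) (u : Fin m → ℝ) : ℝ :=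
  ∫ ψ : Fin (m + 1) → ℝ, p m a y (θ, ψ, τ, u)

/-- Marginal posterior density `p(θ, φ ∣ y)`. -/
noncomputable def pθφ (m : ℕ) (a : ℝ) (y : Fin (m + 1) → ℝ)
    (θ : Fin (m + 1) → ℝ) (u : Fin m → ℝ) : ℝ :=
  ∫ w : (Fin (m + 1) → ℝ) × ℝ, p m a y (θ, w.1, w.2, u)

/-- Marginal posterior density `p(θ ∣ y)`. -/
noncomputable def pθ (m : ℕ) (a : ℝ) (y : Fin (m + 1) → ℝ) (θ : Fin (m + 1) → ℝ) : ℝ :=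
  ∫ w : (Fin (m + 1) → ℝ) × ℝ × (Fin m → ℝ), p m a y (θ, w.1, w.2.1, w.2.2)

/-! ### Product integrals and the Dirichlet integral -/

/-- Tonelli for a product of functions of the single coordinates of `Fin n → ℝ`. -/
lemma lintegral_fin_prod {n : ℕ} (f : Fin n → ℝ → ENNReal) (hf : ∀ i, Measurable (f i)) :
    ∫⁻ x : Fin n → ℝ, ∏ i, f i (x i) = ∏ i, ∫⁻ t, f i t := by
  induction n with
  | zero => simp [volume_pi]
  | succ n ih =>
    have h := (volume_preserving_piFinSuccAbove (fun _ : Fin (n + 1) => ℝ) 0).symm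
    rw [← h.lintegral_comp_emb (MeasurableEquiv.measurableEmbedding _), Fin.prod_univ_succ,
      ← ih (fun i => f i.succ) (fun i => hf _)]
    simp only [MeasurableEquiv.piFinSuccAbove_symm_apply, Fin.insertNthEquiv_zero,
      Fin.consEquiv_apply, Fin.prod_univ_succ, Fin.cons_zero, Fin.cons_succ]
    exact lintegral_prod_mul (hf 0).aemeasurable
      (Finset.measurable_fun_prod _ fun (i : Fin n) _ =>
        (hf i.succ).comp (measurable_pi_apply i)).aemeasurable

/-- The kernel `t ↦ t^(α-1)` on `(0,∞)`, extended by zero. -/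
noncomputable def powKer (α t : ℝ) : ENNReal := if 0 < t then ENNReal.ofReal (t ^ (α - 1)) else 0

lemma measurable_powKer (α : ℝ) : Measurable (powKer α) :=
  Measurable.ite measurableSet_Ioi (by fun_prop) measurable_const

lemma powKer_mul {α s : ℝ} (hs : 0 < s) (t : ℝ) :
    powKer α (s * t) = ENNReal.ofReal (s ^ (α - 1)) * powKer α t := by
  unfold powKer
  by_cases ht : 0 < t
  · rw [if_pos ht, if_pos (mul_pos hs ht), mul_rpow hs.le ht.le, ENNReal.ofReal_mul (by positivity)]
  · rw [if_neg ht, if_neg (by rw [mul_pos_iff_of_pos_left hs]; exact ht), mul_zero]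

lemma lintegral_powKer_one_lt_top {α β : ℝ} (hα : 0 < α) (hβ : 0 < β) :
    ∫⁻ v, powKer α v * powKer β (1 - v) < ⊤ := by
  have hb := ProbabilityTheory.beta_pos hα hβ
  calc ∫⁻ v, powKer α v * powKer β (1 - v)
      ≤ ∫⁻ v, ENNReal.ofReal (ProbabilityTheory.beta α β) * ProbabilityTheory.betaPDF α β v := by
        refine lintegral_mono fun v => ?_
        unfold powKer
        split_ifs with h1 h2
        · rw [ProbabilityTheory.betaPDF_of_pos_lt_one h1 (by linarith),
            ← ENNReal.ofReal_mul (by positivity), ← ENNReal.ofReal_mul hb.le]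
          apply le_of_eq
          congr 1
          field_simp
        all_goals simp
    _ = ENNReal.ofReal (ProbabilityTheory.beta α β) := by
        rw [lintegral_const_mul' _ _ ENNReal.ofReal_ne_top,
          ProbabilityTheory.lintegral_betaPDF_eq_one hα hβ, mul_one]
    _ < ⊤ := ENNReal.ofReal_lt_top

/-- The convolution of two power kernels is bounded by a multiple of a power kernel, the
constant being the Beta integral. -/
lemma lintegral_powKer_le (α β s : ℝ) :
    ∫⁻ v, powKer α v * powKer β (s - v)
      ≤ (∫⁻ v, powKer α v * powKer β (1 - v)) * powKer (α + β) s := by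
  by_cases hs : 0 < s
  · have hmap := Real.smul_map_volume_mul_left hs.ne'
    have hm : Measurable fun v => powKer α v * powKer β (s - v) :=
      (measurable_powKer α).mul ((measurable_powKer β).comp (by fun_prop))
    have hm1 : Measurable fun v => powKer α v * powKer β (1 - v) :=
      (measurable_powKer α).mul ((measurable_powKer β).comp (by fun_prop))
    conv_lhs => rw [← hmap]
    rw [lintegral_smul_measure, lintegral_map hm (by fun_prop)]
    have : ∀ v, powKer α (s * v) * powKer β (s - s * v) =
        ENNReal.ofReal (s ^ (α - 1) * s ^ (β - 1)) * (powKer α v * powKer β (1 - v)) := by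
      intro v
      rw [show s - s * v = s * (1 - v) by ring, powKer_mul hs, powKer_mul hs,
        ENNReal.ofReal_mul (by positivity)]
      ring
    simp_rw [this]
    rw [lintegral_const_mul _ hm1, smul_eq_mul, ← mul_assoc,
      ← ENNReal.ofReal_mul (abs_nonneg _), mul_comm]
    apply le_of_eq
    congr 1
    rw [powKer, if_pos hs, abs_of_pos hs]
    congr 1
    rw [← rpow_add hs]
    nth_rewrite 1 [← rpow_one s]
    rw [← rpow_add hs]
    congr 1
    ring
  · have : ∀ v, powKer α v * powKer β (s - v) = 0 := by
      intro v
      unfold powKer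
      split_ifs with h1 h2
      · linarith
      all_goals simp
    simp [this]

/-- The Dirichlet integral on the simplex of size `s`, an `(m+1)`-fold convolution of power kernels,
is finite, with the bound in `s` that makes the induction work. -/
lemma lintegral_dirichlet_le {a : ℝ} (ha : 0 < a) (m : ℕ) :
    ∃ C : ENNReal, C < ⊤ ∧ ∀ s : ℝ,
      ∫⁻ u : Fin m → ℝ, (∏ i, powKer a (u i)) * powKer a (s - ∑ i, u i)
        ≤ C * powKer ((m + 1) * a) s := by
  induction m with
  | zero => exact ⟨1, by simp, fun s => by simp [volume_pi]⟩
  | succ m ih =>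
    obtain ⟨C, hC, h⟩ := ih
    refine ⟨(∫⁻ v, powKer a v * powKer ((m + 1) * a) (1 - v)) * C,
      ENNReal.mul_lt_top (lintegral_powKer_one_lt_top ha (by positivity)) hC, fun s => ?_⟩
    have he := (volume_preserving_piFinSuccAbove (fun _ : Fin (m + 1) => ℝ) 0).symm
    rw [← he.lintegral_comp_emb (MeasurableEquiv.measurableEmbedding _)]
    simp only [MeasurableEquiv.piFinSuccAbove_symm_apply, Fin.insertNthEquiv_zero,
      Fin.consEquiv_apply, Fin.prod_univ_succ, Fin.sum_univ_succ, Fin.cons_zero, Fin.cons_succ]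
    have hp := measurable_powKer a
    have hmeas : Measurable fun z : ℝ × (Fin m → ℝ) => powKer a z.1 * (∏ i, powKer a (z.2 i)) *
        powKer a (s - (z.1 + ∑ i, z.2 i)) := by
      refine Measurable.mul (Measurable.mul (hp.comp measurable_fst) ?_) (hp.comp (by fun_prop))
      exact Finset.measurable_fun_prod _ fun i _ => hp.comp (by fun_prop)
    refine (lintegral_prod _ hmeas.aemeasurable).le.trans ?_
    calc ∫⁻ v, ∫⁻ u : Fin m → ℝ, powKer a v * (∏ i, powKer a (u i)) *
            powKer a (s - (v + ∑ i, u i))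
        ≤ ∫⁻ v, C * (powKer a v * powKer ((m + 1) * a) (s - v)) := by
          refine lintegral_mono fun v => ?_
          have hv : powKer a v ≠ ⊤ := by
            unfold powKer; split_ifs <;> simp
          simp_rw [mul_assoc, ← sub_sub]
          rw [lintegral_const_mul' _ _ hv]
          calc _ ≤ powKer a v * (C * powKer ((m + 1) * a) (s - v)) := by
                gcongr
                exact h _
            _ = _ := by ring
      _ = C * ∫⁻ v, powKer a v * powKer ((m + 1) * a) (s - v) :=
          lintegral_const_mul' _ _ hC.ne
      _ ≤ C * ((∫⁻ v, powKer a v * powKer ((m + 1) * a) (1 - v)) *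
            powKer (a + (m + 1) * a) s) := by
          gcongr
          exact lintegral_powKer_le _ _ _
      _ = _ := by
          rw [show a + ((m : ℝ) + 1) * a = (((m + 1 : ℕ) : ℝ) + 1) * a by push_cast; ring]
          ring

/-! ### Structure of the unnormalized posterior -/

lemma phiFull_pos {m : ℕ} {u : Fin m → ℝ} (hu : inSimplex m u) (i : Fin (m + 1)) :
    0 < phiFull m u i := by
  unfold phiFull
  refine Fin.lastCases ?_ (fun j => ?_) i
  · simpa using hu.2
  · simpa using hu.1 j

lemma measurable_phiFull {m : ℕ} (i : Fin (m + 1)) : Measurable fun u => phiFull m u i := by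
  unfold phiFull
  refine Fin.lastCases ?_ (fun j => ?_) i
  · simp only [Fin.snoc_last]
    fun_prop
  · simp only [Fin.snoc_castSucc]
    fun_prop

lemma isOpen_inSimplex (m : ℕ) : IsOpen {u : Fin m → ℝ | inSimplex m u} := by
  simp only [inSimplex, Set.ofPred_and, Set.ofPred_forall]
  refine (isOpen_iInter_of_finite fun i => ?_).inter ?_
  · exact isOpen_lt continuous_const (continuous_apply i)
  · exact isOpen_lt (by fun_prop) continuous_const

/-- The open set of admissible scales `(ψ, τ)`. -/
def posScales (m : ℕ) : Set ((Fin (m + 1) → ℝ) × ℝ) := {w | (∀ i, 0 < w.1 i) ∧ 0 < w.2}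

lemma isOpen_posScales (m : ℕ) : IsOpen (posScales m) := by
  simp only [posScales, Set.ofPred_and, Set.ofPred_forall]
  refine (isOpen_iInter_of_finite fun i => ?_).inter ?_
  · exact isOpen_lt continuous_const (by fun_prop)
  · exact isOpen_lt continuous_const (by fun_prop)

lemma measurable_post (m : ℕ) (a : ℝ) (y : Fin (m + 1) → ℝ) : Measurable (post m a y) := by
  unfold post
  have hφ : ∀ i, Measurable fun x : E m => phiFull m x.2.2.2 i := fun i =>
    (measurable_phiFull i).comp (by fun_prop)
  have hS : MeasurableSet {x : E m | (∀ i, 0 < x.2.1 i) ∧ 0 < x.2.2.1 ∧ inSimplex m x.2.2.2} := by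
    have h1 : MeasurableSet {x : E m | (x.2.1, x.2.2.1) ∈ posScales m} :=
      (isOpen_posScales m).measurableSet.preimage (by fun_prop)
    have h2 : MeasurableSet {x : E m | inSimplex m x.2.2.2} :=
      (isOpen_inSimplex m).measurableSet.preimage (f := fun x : E m => x.2.2.2) (by fun_prop)
    convert h1.inter h2 using 1
    ext x
    simp [posScales, and_assoc]
  have h0 : Measurable fun x : E m =>
      if (∀ i, 0 < x.2.1 i) ∧ 0 < x.2.2.1 ∧ inSimplex m x.2.2.2 then (1 : ℝ) else 0 :=
    Measurable.ite hS measurable_const measurable_const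
  dsimp only
  refine Measurable.mul (Measurable.mul (Measurable.mul (Measurable.mul (h0.mul ?_) ?_) ?_) ?_) ?_
  all_goals fun_prop

/-- The part of `post` that does not involve the weights `φ`. -/
noncomputable def scaleFactor (m : ℕ) (a : ℝ) (y θ ψ : Fin (m + 1) → ℝ) (τ : ℝ) : ℝ :=
  (∏ i, (2 * π) ^ (-(1 : ℝ) / 2) * exp (-(y i - θ i) ^ 2 / 2)) *
    (∏ i, (2 * π * ψ i * τ ^ 2) ^ (-(1 : ℝ) / 2)) *
    (∏ i, (1 / 2 : ℝ) * exp (-ψ i / 2)) *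
    (((1 / 2 : ℝ) ^ (((m : ℝ) + 1) * a) / Gamma (((m : ℝ) + 1) * a)) *
      τ ^ (((m : ℝ) + 1) * a - 1) * exp (-τ / 2))

/-- The part of `post` that involves the weights `φ` only. -/
noncomputable def weightFactor (m : ℕ) (a : ℝ) (u : Fin m → ℝ) : ℝ :=
  (∏ i, (phiFull m u i ^ 2) ^ (-(1 : ℝ) / 2)) *
    ((Gamma (((m : ℝ) + 1) * a) / ∏ _i : Fin (m + 1), Gamma a) * ∏ i, phiFull m u i ^ (a - 1))

/-- The exponent in which the scales `(ψ, τ)` and the weights `φ` interact. -/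
noncomputable def quadForm (m : ℕ) (θ ψ : Fin (m + 1) → ℝ) (τ : ℝ) (u : Fin m → ℝ) : ℝ :=
  ∑ i, θ i ^ 2 / (2 * ψ i * τ ^ 2 * phiFull m u i ^ 2)

lemma scaleFactor_pos {m : ℕ} {a : ℝ} (ha : 0 < a) (y θ : Fin (m + 1) → ℝ)
    {ψ : Fin (m + 1) → ℝ} {τ : ℝ} (hw : (ψ, τ) ∈ posScales m) : 0 < scaleFactor m a y θ ψ τ := by
  obtain ⟨h1, h2⟩ := hw
  simp only at h1 h2
  have hG : 0 < Gamma (((m : ℝ) + 1) * a) := Gamma_pos_of_pos (by positivity)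
  have h : 0 < ∏ i, (2 * π * ψ i * τ ^ 2) ^ (-(1 : ℝ) / 2) :=
    Finset.prod_pos fun i _ => by have := h1 i; positivity
  unfold scaleFactor
  positivity

lemma weightFactor_pos {m : ℕ} {a : ℝ} (ha : 0 < a) {u : Fin m → ℝ} (hu : inSimplex m u) :
    0 < weightFactor m a u := by
  have hG : 0 < Gamma (((m : ℝ) + 1) * a) := Gamma_pos_of_pos (by positivity)
  have hG' : 0 < Gamma a := Gamma_pos_of_pos ha
  have h : 0 < ∏ i, (phiFull m u i ^ 2) ^ (-(1 : ℝ) / 2) :=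
    Finset.prod_pos fun i _ => by have := phiFull_pos hu i; positivity
  have h' : 0 < ∏ i, phiFull m u i ^ (a - 1) :=
    Finset.prod_pos fun i _ => by have := phiFull_pos hu i; positivity
  unfold weightFactor
  positivity

/-- On its support, `post` separates into a function of the scales and a function of the weights,
up to the interaction `exp (-quadForm)`. -/
lemma post_eq {m : ℕ} {a : ℝ} (y θ : Fin (m + 1) → ℝ) {ψ : Fin (m + 1) → ℝ} {τ : ℝ}
    {u : Fin m → ℝ} (hw : (ψ, τ) ∈ posScales m) (hu : inSimplex m u) :
    post m a y (θ, ψ, τ, u) =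
      scaleFactor m a y θ ψ τ * (weightFactor m a u * exp (-quadForm m θ ψ τ u)) := by
  obtain ⟨h1, h2⟩ := hw
  simp only at h1 h2
  have hprod : ∏ i, (2 * π * ψ i * τ ^ 2 * phiFull m u i ^ 2) ^ (-(1 : ℝ) / 2) *
      exp (-(θ i) ^ 2 / (2 * ψ i * τ ^ 2 * phiFull m u i ^ 2)) =
      (∏ i, (2 * π * ψ i * τ ^ 2) ^ (-(1 : ℝ) / 2)) *
      (∏ i, (phiFull m u i ^ 2) ^ (-(1 : ℝ) / 2)) * exp (-quadForm m θ ψ τ u) := by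
    rw [quadForm, ← Finset.sum_neg_distrib, exp_sum, ← Finset.prod_mul_distrib,
      ← Finset.prod_mul_distrib]
    refine Finset.prod_congr rfl fun i _ => ?_
    have := h1 i
    rw [mul_rpow (by positivity) (by positivity), neg_div _ (θ i ^ 2)]
  unfold post
  simp only [h1, h2, hu, implies_true, and_self, if_true]
  rw [hprod]
  unfold scaleFactor weightFactor
  ring

lemma post_eq_zero {m : ℕ} {a : ℝ} (y θ : Fin (m + 1) → ℝ) {ψ : Fin (m + 1) → ℝ} {τ : ℝ}
    {u : Fin m → ℝ} (h : ¬((ψ, τ) ∈ posScales m ∧ inSimplex m u)) :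
    post m a y (θ, ψ, τ, u) = 0 := by
  simp only [posScales, Set.mem_ofPred_eq, and_assoc] at h
  simp only [post, if_neg h, zero_mul]

lemma post_pos {m : ℕ} {a : ℝ} (ha : 0 < a) (y θ : Fin (m + 1) → ℝ) {ψ : Fin (m + 1) → ℝ} {τ : ℝ}
    {u : Fin m → ℝ} (hw : (ψ, τ) ∈ posScales m) (hu : inSimplex m u) :
    0 < post m a y (θ, ψ, τ, u) := by
  rw [post_eq y θ hw hu]
  exact mul_pos (scaleFactor_pos ha y θ hw) (mul_pos (weightFactor_pos ha hu) (exp_pos _))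

lemma post_nonneg {m : ℕ} {a : ℝ} (ha : 0 < a) (y : Fin (m + 1) → ℝ) (x : E m) :
    0 ≤ post m a y x := by
  obtain ⟨θ, ψ, τ, u⟩ := x
  by_cases h : (ψ, τ) ∈ posScales m ∧ inSimplex m u
  · exact (post_pos ha y θ h.1 h.2).le
  · exact (post_eq_zero y θ h).ge

/-! ### Integrability and positivity of the marginals -/

/-- `post` is dominated by the prior density, written with the Gaussian, exponential and gamma
densities of Mathlib, because the likelihood is at most one. -/
lemma ofReal_post_le {m : ℕ} {a : ℝ} (ha : 0 < a) (y θ ψ : Fin (m + 1) → ℝ) (τ : ℝ)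
    (u : Fin m → ℝ) (h1 : ∀ i, 0 < ψ i) (h2 : 0 < τ) (h3 : inSimplex m u) :
    ENNReal.ofReal (post m a y (θ, ψ, τ, u)) ≤
      (∏ i, ProbabilityTheory.gaussianPDF 0 (ψ i * τ ^ 2 * phiFull m u i ^ 2).toNNReal (θ i)) *
      ((∏ i, ProbabilityTheory.gammaPDF 1 (1 / 2) (ψ i)) *
      (ProbabilityTheory.gammaPDF (((m : ℝ) + 1) * a) (1 / 2) τ *
      (ENNReal.ofReal (Gamma (((m : ℝ) + 1) * a) / ∏ _i : Fin (m + 1), Gamma a) *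
        ((∏ i, powKer a (u i)) * powKer a (1 - ∑ i, u i))))) := by
  have hφ := phiFull_pos h3
  have hG : 0 < Gamma (((m : ℝ) + 1) * a) := Gamma_pos_of_pos (by positivity)
  have hG' : 0 < Gamma a := Gamma_pos_of_pos ha
  have e1 : (∏ i, powKer a (u i)) * powKer a (1 - ∑ i, u i)
      = ENNReal.ofReal (∏ i, phiFull m u i ^ (a - 1)) := by
    rw [ENNReal.ofReal_prod_of_nonneg fun i _ => rpow_nonneg (hφ i).le _, Fin.prod_univ_castSucc]
    simp only [phiFull, Fin.snoc_castSucc, Fin.snoc_last]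
    simp only [powKer, h3.1, if_true, sub_pos.2 h3.2]
  have e2 : ∀ i, ProbabilityTheory.gammaPDF 1 (1 / 2) (ψ i)
      = ENNReal.ofReal (1 / 2 * exp (-ψ i / 2)) := by
    intro i
    rw [ProbabilityTheory.gammaPDF_of_nonneg (h1 i).le]
    congr 1
    simp
    ring_nf
  have e3 : ∀ i, ProbabilityTheory.gaussianPDF 0 (ψ i * τ ^ 2 * phiFull m u i ^ 2).toNNReal (θ i)
      = ENNReal.ofReal ((2 * π * ψ i * τ ^ 2 * phiFull m u i ^ 2) ^ (-(1 : ℝ) / 2) *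
      exp (-(θ i) ^ 2 / (2 * ψ i * τ ^ 2 * phiFull m u i ^ 2))) := by
    intro i
    have hv : 0 ≤ ψ i * τ ^ 2 * phiFull m u i ^ 2 := by have := (h1 i).le; positivity
    rw [ProbabilityTheory.gaussianPDF, ProbabilityTheory.gaussianPDFReal, Real.coe_toNNReal _ hv,
      sqrt_eq_rpow, ← rpow_neg (by positivity)]
    congr 2
    · congr 1 <;> ring
    · congr 1
      ring
  have hA := fun i => (h1 i).le
  have hB : 0 ≤ ∏ i, phiFull m u i ^ (a - 1) :=
    Finset.prod_nonneg fun i _ => rpow_nonneg (hφ i).le _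
  have hN : 0 ≤ ∏ i, (2 * π * ψ i * τ ^ 2 * phiFull m u i ^ 2) ^ (-(1 : ℝ) / 2) *
      exp (-(θ i) ^ 2 / (2 * ψ i * τ ^ 2 * phiFull m u i ^ 2)) :=
    Finset.prod_nonneg fun i _ => by have := hA i; positivity
  rw [e1, ProbabilityTheory.gammaPDF_of_nonneg h2.le]
  simp_rw [e2, e3]
  rw [← ENNReal.ofReal_prod_of_nonneg fun i _ => by have := hA i; positivity,
    ← ENNReal.ofReal_prod_of_nonneg fun i _ => by positivity,
    ← ENNReal.ofReal_mul (by positivity), ← ENNReal.ofReal_mul (by positivity),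
    ← ENNReal.ofReal_mul (by positivity), ← ENNReal.ofReal_mul (by positivity)]
  apply ENNReal.ofReal_le_ofReal
  have hlik : ∏ i, (2 * π) ^ (-(1 : ℝ) / 2) * exp (-(y i - θ i) ^ 2 / 2) ≤ 1 := by
    refine Finset.prod_le_one (fun i _ => by positivity) fun i _ => ?_
    refine mul_le_one₀ ?_ (exp_pos _).le ?_
    · exact rpow_le_one_of_one_le_of_nonpos (by nlinarith [pi_gt_three]) (by norm_num)
    · rw [exp_le_one_iff]
      nlinarith [sq_nonneg (y i - θ i)]
  unfold post
  simp only [h1, h2, h3, implies_true, and_self, if_true, one_mul]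
  rw [show -(1 / 2 * τ) = -τ / 2 by ring]
  refine le_trans (le_of_eq ?_) (mul_le_of_le_one_left ?_ hlik)
  · ring
  · positivity

lemma integrable_post {m : ℕ} {a : ℝ} (ha : 0 < a) (y : Fin (m + 1) → ℝ) :
    Integrable (post m a y) := by
  refine ⟨(measurable_post m a y).aestronglyMeasurable, ?_⟩
  rw [hasFiniteIntegral_iff_ofReal (.of_forall (post_nonneg ha y))]
  set K := ENNReal.ofReal (Gamma (((m : ℝ) + 1) * a) / ∏ _i : Fin (m + 1), Gamma a) with hK
  obtain ⟨C, hC, hD⟩ := lintegral_dirichlet_le ha m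
  have hgm : ∀ b r, Measurable (ProbabilityTheory.gammaPDF b r) := fun b r =>
    (ProbabilityTheory.measurable_gammaPDFReal b r).ennreal_ofReal
  have hm1 : Measurable fun ψ : Fin (m + 1) → ℝ =>
      ∏ i, ProbabilityTheory.gammaPDF 1 (1 / 2) (ψ i) :=
    Finset.measurable_fun_prod _ fun i _ => (hgm _ _).comp (measurable_pi_apply i)
  have hm2 : Measurable fun u : Fin m → ℝ =>
      K * ((∏ i, powKer a (u i)) * powKer a (1 - ∑ i, u i)) := by
    refine Measurable.const_mul (Measurable.mul ?_ ((measurable_powKer a).comp (by fun_prop))) _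
    exact Finset.measurable_fun_prod _ fun i _ => (measurable_powKer a).comp (by fun_prop)
  refine ((lintegral_prod_symm _
    (measurable_post m a y).ennreal_ofReal.aemeasurable).le.trans_lt ?_)
  calc ∫⁻ w : (Fin (m + 1) → ℝ) × ℝ × (Fin m → ℝ), ∫⁻ θ, ENNReal.ofReal (post m a y (θ, w))
      ≤ ∫⁻ w : (Fin (m + 1) → ℝ) × ℝ × (Fin m → ℝ),
        (∏ i, ProbabilityTheory.gammaPDF 1 (1 / 2) (w.1 i)) *
        (ProbabilityTheory.gammaPDF (((m : ℝ) + 1) * a) (1 / 2) w.2.1 *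
          (K * ((∏ i, powKer a (w.2.2 i)) * powKer a (1 - ∑ i, w.2.2 i)))) := by
        refine lintegral_mono fun w => ?_
        obtain ⟨ψ, τ, u⟩ := w
        by_cases h : (∀ i, 0 < ψ i) ∧ 0 < τ ∧ inSimplex m u
        · obtain ⟨h1, h2, h3⟩ := h
          refine (lintegral_mono fun θ => ofReal_post_le ha y θ ψ τ u h1 h2 h3).trans ?_
          have hg : Measurable fun θ : Fin (m + 1) → ℝ => ∏ i, ProbabilityTheory.gaussianPDF 0
              (ψ i * τ ^ 2 * phiFull m u i ^ 2).toNNReal (θ i) :=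
            Finset.measurable_fun_prod _ fun i _ =>
              (ProbabilityTheory.measurable_gaussianPDF _ _).comp (measurable_pi_apply i)
          rw [lintegral_mul_const _ hg,
            lintegral_fin_prod _ fun i => ProbabilityTheory.measurable_gaussianPDF _ _,
            Finset.prod_eq_one, one_mul]
          intro i _
          refine ProbabilityTheory.lintegral_gaussianPDF_eq_one _ ?_
          have := h1 i
          have := phiFull_pos h3 i
          exact (Real.toNNReal_pos.2 (by positivity)).ne'
        · have h0 : ∀ θ, post m a y (θ, ψ, τ, u) = 0 := by
            intro θ
            simp only [post, if_neg h, zero_mul]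
          simp [h0]
    _ = 1 * (1 * (K * ∫⁻ u : Fin m → ℝ, (∏ i, powKer a (u i)) * powKer a (1 - ∑ i, u i))) := by
        refine (lintegral_prod_mul hm1.aemeasurable (ν := (volume : Measure (ℝ × (Fin m → ℝ))))
          (g := fun v => ProbabilityTheory.gammaPDF (((m : ℝ) + 1) * a) (1 / 2) v.1 *
          (K * ((∏ i, powKer a (v.2 i)) * powKer a (1 - ∑ i, v.2 i)))) ?_).trans ?_
        · exact (((hgm _ _).comp measurable_fst).mul (hm2.comp measurable_snd)).aemeasurable
        congr 1
        · rw [lintegral_fin_prod _ fun i => hgm _ _]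
          exact Finset.prod_eq_one fun i _ =>
            ProbabilityTheory.lintegral_gammaPDF_eq_one one_pos (by norm_num)
        · refine (lintegral_prod_mul (hgm _ _).aemeasurable hm2.aemeasurable).trans ?_
          rw [ProbabilityTheory.lintegral_gammaPDF_eq_one (by positivity) (by norm_num),
            lintegral_const_mul' _ _ ENNReal.ofReal_ne_top]
    _ < ⊤ := by
        rw [one_mul, one_mul]
        refine ENNReal.mul_lt_top ENNReal.ofReal_lt_top ((hD 1).trans_lt ?_)
        refine ENNReal.mul_lt_top hC ?_
        simp [powKer]

lemma Z_pos {m : ℕ} {a : ℝ} (ha : 0 < a) (y : Fin (m + 1) → ℝ) : 0 < Z m a y := by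
  rw [Z, integral_pos_iff_support_of_nonneg (post_nonneg ha y) (integrable_post ha y)]
  set S : Set (E m) := {x | (x.2.1, x.2.2.1) ∈ posScales m ∧ inSimplex m x.2.2.2}
  have hS : IsOpen S := ((isOpen_posScales m).preimage (by fun_prop)).inter
    ((isOpen_inSimplex m).preimage (f := fun x : E m => x.2.2.2) (by fun_prop))
  have hne : S.Nonempty := by
    refine ⟨(0, fun _ => 1, 1, fun _ => 1 / ((m : ℝ) + 1)), ⟨fun _ => one_pos, one_pos⟩,
      fun _ => by positivity, ?_⟩
    simp only [Finset.sum_const, Finset.card_univ, Fintype.card_fin, nsmul_eq_mul]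
    rw [mul_one_div, div_lt_one (by positivity)]
    linarith
  have : (volume : Measure (ℝ × (Fin m → ℝ))).IsOpenPosMeasure :=
    inferInstanceAs ((volume : Measure ℝ).prod volume).IsOpenPosMeasure
  have : (volume : Measure ((Fin (m + 1) → ℝ) × ℝ × (Fin m → ℝ))).IsOpenPosMeasure :=
    inferInstanceAs ((volume : Measure (Fin (m + 1) → ℝ)).prod volume).IsOpenPosMeasure
  have : (volume : Measure (E m)).IsOpenPosMeasure :=
    inferInstanceAs ((volume : Measure (Fin (m + 1) → ℝ)).prod volume).IsOpenPosMeasure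
  refine (hS.measure_pos volume hne).trans_le (measure_mono ?_)
  rintro ⟨θ, ψ, τ, u⟩ ⟨h1, h2⟩
  exact (post_pos ha y θ h1 h2).ne'

/-- The marginal `p(θ, φ ∣ y)` is a genuine (finite, positive) integral for almost every `(θ, φ)`
with `φ` in the simplex. At special `θ` the integral may diverge, so that the Bochner integral is
zero there; Fubini excludes this only almost everywhere. -/
lemma ae_pθφ_pos {m : ℕ} {a : ℝ} (ha : 0 < a) (y : Fin (m + 1) → ℝ) :
    ∀ᵐ z : (Fin (m + 1) → ℝ) × (Fin m → ℝ), inSimplex m z.2 → 0 < pθφ m a y z.1 z.2 := by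
  let T : ((Fin (m + 1) → ℝ) × (Fin m → ℝ)) × ((Fin (m + 1) → ℝ) × ℝ) → E m :=
    fun z => (z.1.1, z.2.1, z.2.2, z.1.2)
  have hT : MeasurePreserving T := by
    have h1 : MeasurePreserving (MeasurableEquiv.prodAssoc :
        ((Fin (m + 1) → ℝ) × (Fin m → ℝ)) × ((Fin (m + 1) → ℝ) × ℝ) ≃ᵐ _) :=
      volume_preserving_prodAssoc
    have h2 : MeasurePreserving (fun z : (Fin m → ℝ) × ((Fin (m + 1) → ℝ) × ℝ) =>
        (z.2.1, z.2.2, z.1)) :=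
      (volume_preserving_prodAssoc (α₁ := Fin (m + 1) → ℝ) (β₁ := ℝ) (γ₁ := Fin m → ℝ)).comp
        (Measure.measurePreserving_swap (μ := (volume : Measure (Fin m → ℝ)))
          (ν := (volume : Measure ((Fin (m + 1) → ℝ) × ℝ))))
    exact ((MeasurePreserving.id (volume : Measure (Fin (m + 1) → ℝ))).prod h2).comp h1
  have hint := hT.integrable_comp_of_integrable (integrable_post ha y)
  filter_upwards [hint.prod_right_ae] with z hz hu
  have hz' : Integrable fun w : (Fin (m + 1) → ℝ) × ℝ => post m a y (z.1, w.1, w.2, z.2) := hz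
  unfold pθφ p
  rw [integral_div]
  refine div_pos ?_ (Z_pos ha y)
  rw [integral_pos_iff_support_of_nonneg (fun w => post_nonneg ha y _) hz']
  have hne : (posScales m).Nonempty := ⟨(fun _ => 1, 1), fun _ => one_pos, one_pos⟩
  refine ((isOpen_posScales m).measure_pos volume hne).trans_le (measure_mono ?_)
  rintro ⟨ψ, τ⟩ hw
  exact (post_pos ha y z.1 hw hu).ne'

/-! ### Dependence of the interaction on the scales -/

/-- The difference of the interaction terms at two weight vectors with distinct first coordinates
depends on the first local scale, as soon as `θ 0 ≠ 0`. -/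
lemma quadForm_sub_not_const {k : ℕ} {θ : Fin (k + 2) → ℝ} (hθ : θ 0 ≠ 0) {u v : Fin (k + 1) → ℝ}
    (hu : inSimplex (k + 1) u) (hv : inSimplex (k + 1) v) (huv : u 0 ≠ v 0) (c : ℝ)
    (h : ∀ ψ : Fin (k + 2) → ℝ, (∀ i, 0 < ψ i) →
      quadForm (k + 1) θ ψ 1 u - quadForm (k + 1) θ ψ 1 v = c) : False := by
  have hphi : ∀ w : Fin (k + 1) → ℝ, phiFull (k + 1) w 0 = w 0 := fun w => by
    unfold phiFull
    exact Fin.snoc_castSucc (α := fun _ => ℝ) (i := 0) (p := w) (x := _)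
  -- The values `ψ 0 = 1` and `ψ 0 = 1/2` already differ, all other scales being one.
  have h1 := h (Fin.cons 1 fun _ => 1) (Fin.cases (by simp) (by simp))
  have h2 := h (Fin.cons (1 / 2) fun _ => 1) (Fin.cases (by simp) (by simp))
  unfold quadForm at h1 h2
  simp only [Fin.sum_univ_succ (n := k + 1), Fin.cons_zero, Fin.cons_succ, hphi] at h1 h2
  have hu0 := hu.1 0
  have hv0 := hv.1 0
  have h3 : θ 0 ^ 2 / (2 * 1 * 1 ^ 2 * u 0 ^ 2) - θ 0 ^ 2 / (2 * 1 * 1 ^ 2 * v 0 ^ 2) =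
    θ 0 ^ 2 / (2 * (1 / 2) * 1 ^ 2 * u 0 ^ 2) - θ 0 ^ 2 / (2 * (1 / 2) * 1 ^ 2 * v 0 ^ 2) := by
    linarith
  field_simp at h3
  have h4 : v 0 ^ 2 = u 0 ^ 2 := by linarith
  exact huv ((pow_left_inj₀ hu0.le hv0.le two_ne_zero).1 h4.symm)

/-- If the posterior densities at two weight vectors are proportional as functions of the scales,
almost everywhere, then the interaction terms differ by a constant, everywhere. -/
lemma quadForm_sub_const_of_ae {m : ℕ} {a : ℝ} (ha : 0 < a) (y θ : Fin (m + 1) → ℝ)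
    {u v : Fin m → ℝ} (hu : inSimplex m u) (hv : inSimplex m v) {c d : ℝ} (hc : 0 < c) (hd : 0 < d)
    (h : ∀ᵐ w : (Fin (m + 1) → ℝ) × ℝ,
      p m a y (θ, w.1, w.2, u) * c = p m a y (θ, w.1, w.2, v) * d) :
    ∃ r : ℝ, ∀ ψ : Fin (m + 1) → ℝ, (∀ i, 0 < ψ i) →
      quadForm m θ ψ 1 u - quadForm m θ ψ 1 v = r := by
  have hZ := Z_pos ha y
  have hcont : ∀ v : Fin m → ℝ, inSimplex m v →
      ContinuousOn (fun w : (Fin (m + 1) → ℝ) × ℝ => quadForm m θ w.1 w.2 v) (posScales m) := by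
    intro v hv
    unfold quadForm
    refine continuousOn_finsetSum _ fun i _ => ContinuousOn.div (by fun_prop) (by fun_prop) ?_
    rintro w ⟨h1, h2⟩
    have := h1 i
    have := phiFull_pos hv i
    positivity
  have hWu := weightFactor_pos ha hu
  have hWv := weightFactor_pos ha hv
  set r := log (weightFactor m a u * c) - log (weightFactor m a v * d) with hr
  have hae : (fun w : (Fin (m + 1) → ℝ) × ℝ => quadForm m θ w.1 w.2 u - quadForm m θ w.1 w.2 v)
      =ᵐ[volume.restrict (posScales m)] fun _ => r := by
    rw [Filter.EventuallyEq, ae_restrict_iff' (isOpen_posScales m).measurableSet]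
    filter_upwards [h] with w hw hpos
    have hA := scaleFactor_pos ha y θ (ψ := w.1) (τ := w.2) hpos
    simp only [p] at hw
    rw [post_eq y θ hpos hu, post_eq y θ hpos hv] at hw
    have hw' : weightFactor m a u * c * exp (-quadForm m θ w.1 w.2 u) =
        weightFactor m a v * d * exp (-quadForm m θ w.1 w.2 v) := by
      field_simp at hw
      linarith
    have hlog := congrArg log hw'
    rw [log_mul (by positivity) (exp_pos _).ne', log_mul (by positivity) (exp_pos _).ne',
      log_exp, log_exp] at hlog
    linarith
  have heq := Measure.eqOn_open_of_ae_eq hae (isOpen_posScales m)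
    ((hcont u hu).sub (hcont v hv)) continuousOn_const
  exact ⟨r, fun ψ hψ => heq (x := (ψ, 1)) ⟨hψ, one_pos⟩⟩

/-- For the normal means model with `n = m + 1 ≥ 2`, under the Dirichlet–Laplace prior of
parameter `a > 0`, the posterior conditional density
`p(ψ, τ ∣ θ, φ) = p(θ,ψ,τ,φ ∣ y) / p(θ,φ ∣ y)` is not (almost everywhere) constant as a
function of `φ`: the set of tuples `(θ, ψ, τ, φ, φ̃)` (with `φ, φ̃` in the open simplex,
parametrized by their free coordinates `u, ũ`) such that
`p(θ,ψ,τ,φ ∣ y) · p(θ,φ̃ ∣ y) ≠ p(θ,ψ,τ,φ̃ ∣ y) · p(θ,φ ∣ y)` has positive Lebesgue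
measure. -/
theorem conditional_density_not_constant_in_phi (m : ℕ) (hm : 1 ≤ m) (a : ℝ) (ha : 0 < a)
    (y : Fin (m + 1) → ℝ) :
    volume {x : (Fin (m + 1) → ℝ) × (Fin (m + 1) → ℝ) × ℝ × (Fin m → ℝ) × (Fin m → ℝ) |
      p m a y (x.1, x.2.1, x.2.2.1, x.2.2.2.1) * pθφ m a y x.1 x.2.2.2.2 ≠
        p m a y (x.1, x.2.1, x.2.2.1, x.2.2.2.2) * pθφ m a y x.1 x.2.2.2.1} ≠ 0 := by
  intro h0
  obtain ⟨k, rfl⟩ : ∃ k, m = k + 1 := ⟨m - 1, by omega⟩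
  -- Regroup the coordinates as `((θ, u, ũ), (ψ, τ))`, to use Fubini with `(θ, u, ũ)` outside.
  let A := Fin (k + 1 + 1) → ℝ
  let D := Fin (k + 1) → ℝ
  let T : (A × D × D) × (A × ℝ) → A × A × ℝ × D × D :=
    fun z => (z.1.1, z.2.1, z.2.2, z.1.2.1, z.1.2.2)
  have hT : MeasurePreserving T := by
    have h1 : MeasurePreserving (MeasurableEquiv.prodAssoc : (A × (D × D)) × (A × ℝ) ≃ᵐ _) :=
      volume_preserving_prodAssoc
    have h2 : MeasurePreserving (fun z : (D × D) × (A × ℝ) => (z.2.1, z.2.2, z.1)) :=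
      (volume_preserving_prodAssoc (α₁ := A) (β₁ := ℝ) (γ₁ := D × D)).comp
        (Measure.measurePreserving_swap (μ := (volume : Measure (D × D)))
          (ν := (volume : Measure (A × ℝ))))
    exact ((MeasurePreserving.id (volume : Measure A)).prod h2).comp h1
  have hae : ∀ᵐ x : A × A × ℝ × D × D,
      p (k + 1) a y (x.1, x.2.1, x.2.2.1, x.2.2.2.1) * pθφ (k + 1) a y x.1 x.2.2.2.2 =
        p (k + 1) a y (x.1, x.2.1, x.2.2.1, x.2.2.2.2) * pθφ (k + 1) a y x.1 x.2.2.2.1 := h0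
  have h1 := Measure.ae_ae_of_ae_prod (hT.quasiMeasurePreserving.ae hae)
  have hq := ae_pθφ_pos (m := k + 1) ha y
  have hpr1 : Measure.QuasiMeasurePreserving (fun z : A × D × D => (z.1, z.2.1)) :=
    Measure.quasiMeasurePreserving_fst.comp
      (volume_preserving_prodAssoc (α₁ := A) (β₁ := D) (γ₁ := D)).symm.quasiMeasurePreserving
  have hpr2 : Measure.QuasiMeasurePreserving (fun z : A × D × D => (z.1, z.2.2)) :=
    hpr1.comp ((MeasurePreserving.id (volume : Measure A)).prod
      (Measure.measurePreserving_swap (μ := (volume : Measure D))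
        (ν := (volume : Measure D)))).quasiMeasurePreserving
  -- An open set of `(θ, u, ũ)` on which the interaction terms differ nontrivially.
  let S : Set (A × D × D) := {z | z.1 0 ≠ 0 ∧ inSimplex (k + 1) z.2.1 ∧ inSimplex (k + 1) z.2.2 ∧
    z.2.1 0 ≠ z.2.2 0}
  have hS : IsOpen S := by
    refine (isOpen_ne_fun (by fun_prop) continuous_const).inter
      (IsOpen.inter ?_ (IsOpen.inter ?_ (isOpen_ne_fun (by fun_prop) (by fun_prop))))
    · exact (isOpen_inSimplex (k + 1)).preimage (f := fun z : A × D × D => z.2.1) (by fun_prop)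
    · exact (isOpen_inSimplex (k + 1)).preimage (f := fun z : A × D × D => z.2.2) (by fun_prop)
  have hconst : ∀ t : ℝ, 1 ≤ t → inSimplex (k + 1) fun _ => 1 / ((k : ℝ) + 1 + t) := by
    intro t ht
    refine ⟨fun _ => by positivity, ?_⟩
    simp only [Finset.sum_const, Finset.card_univ, Fintype.card_fin, nsmul_eq_mul]
    rw [mul_one_div, div_lt_one (by positivity)]
    push_cast
    linarith
  have hne : S.Nonempty := by
    refine ⟨(fun _ => 1, fun _ => 1 / ((k : ℝ) + 1 + 1), fun _ => 1 / ((k : ℝ) + 1 + 2)),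
      one_ne_zero, hconst 1 le_rfl, hconst 2 (by norm_num), fun h => ?_⟩
    simp only at h
    field_simp at h
    linarith
  have hSpos : volume S ≠ 0 := (hS.measure_pos volume hne).ne'
  obtain ⟨⟨θ, u, v⟩, ⟨hθ, hu, hv, huv⟩, h2, h3, h4⟩ :=
    ((frequently_ae_mem_iff.2 hSpos).and_eventually
      (h1.and ((hpr1.ae hq).and (hpr2.ae hq)))).exists
  obtain ⟨r, hr⟩ := quadForm_sub_const_of_ae ha y θ hu hv (h4 hv) (h3 hu) h2
  exact quadForm_sub_not_const hθ hu hv huv r hr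

end DLNormalMeans
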